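/- For each integer i > 0, let D(i) denote the limit inferior as n → ∞ of d(Wₙ, αₙ), where αₙ is the subword of W of length |Wₙ| beginning at position i. Then the infimum of D(i) over all integers i > 0 equals 2/9, and this infimum is not attained (D(i) > 2/9 for every i > 0). -/

import Mathlib

open Filter

/-- The Chacón words: `W₀ = 0`, `W_{n+1} = Wₙ Wₙ 1 Wₙ`. -/
def chaconWord : ℕ → List (Fin 2)
  | 0 => [0]
  | n + 1 => chaconWord n ++ chaconWord n ++ [1] ++ chaconWord n

/-- `W` is the infinite word having every `Wₙ` as an initial segment. -/
def IsChaconInfWord (W : ℕ → Fin 2) : Prop :=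
  ∀ n i, i < (chaconWord n).length → W i = (chaconWord n).getD i 0

/-- A finite word `α` occurs in a finite word `β` at position `j`. -/
def OccursAt (α β : List (Fin 2)) (j : ℕ) : Prop :=
  j + α.length ≤ β.length ∧ ∀ k < α.length, β.getD (j + k) 0 = α.getD k 0

/-- A finite word `α` occurs in the infinite word `W` at position `j`. -/
def OccursAtInf (W : ℕ → Fin 2) (α : List (Fin 2)) (j : ℕ) : Prop :=
  ∀ k < α.length, W (j + k) = α.getD k 0

/-- The subword of the infinite word `W` of length `L` beginning at position `i`. -/
def subword (W : ℕ → Fin 2) (i L : ℕ) : List (Fin 2) :=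
  (List.range L).map fun k => W (i + k)

/-- The (normalized) Hamming distance `d` of two finite words. -/
noncomputable def hamming (α β : List (Fin 2)) : ℝ :=
  (((Finset.range α.length).filter fun i => α.getD i 0 ≠ β.getD i 0).card : ℝ) / α.length

/-- The modified 0-Hamming distance `d₀` of two finite words. -/
noncomputable def hamming0 (α β : List (Fin 2)) : ℝ :=
  (((Finset.range α.length).filter fun i => α.getD i 0 = 0 ∧ β.getD i 0 = 1).card : ℝ) /
    (((Finset.range α.length).filter fun i => α.getD i 0 = 0).card : ℝ)

/-! Let `d₀` be the proportion of the zeros of a word that face a one, and let `h = |Wₙ|`. Since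
`W_{n+1} = Wₙ Wₙ 1 Wₙ`, the distance `d₀` from `W_{n+1}` to the window at `x` is the average of the
distances from `Wₙ` to the windows at `x`, `x + h` and `x + 2h + 1`. In an occurrence of `Wₙ 1 Wₙ`,
the window starting at the second letter and the one starting at the spacer both have
`d₀ = (1 + 3⁻ⁿ) / 2`. By induction on `n`, every window starting strictly between the starts of two
consecutive blocks `Wₙ` has `d₀ ≥ (1 + 3⁻ⁿ) / 6`: at the lower level, either one of the three
windows is of the previous kind, or all three start strictly between consecutive blocks. Averaging
preserves this bound at all later levels, and for the shift `2h + 1` it is an equality.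
Finally, two windows of `W` of equal length contain the same number of ones up to the shift between
them, and the density of zeros in `W` is `2/3`, so `d - (4/3) d₀ → 0`, and `(4/3) (1/6) = 2/9`. -/

open Finset Topology

local notation "ℓ" n:max => List.length (chaconWord n)

theorem length_chaconWord_succ (n : ℕ) : ℓ (n + 1) = 3 * ℓ n + 1 := by
  simp only [chaconWord, List.length_append, List.length_singleton]
  ring

theorem two_mul_length_chaconWord_add_one (n : ℕ) : 2 * ℓ n + 1 = 3 ^ (n + 1) := by
  induction n with
  | zero => rfl
  | succ n ih => rw [pow_succ, ← ih, length_chaconWord_succ]; ring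

theorem lt_length_chaconWord (n : ℕ) : n < ℓ n := by
  induction n with
  | zero => exact Nat.zero_lt_one
  | succ n ih => rw [length_chaconWord_succ]; lia

section Occurrences

variable {V : ℕ → Fin 2} {n p : ℕ}

theorem occursAtInf_singleton {a : Fin 2} : OccursAtInf V [a] p ↔ V p = a := by
  simp [OccursAtInf]

theorem occursAtInf_append {α β : List (Fin 2)} :
    OccursAtInf V (α ++ β) p ↔ OccursAtInf V α p ∧ OccursAtInf V β (p + α.length) := by
  refine ⟨fun h => ⟨fun k hk => ?_, fun k hk => ?_⟩, fun ⟨hα, hβ⟩ k hk => ?_⟩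
  · rw [h k (by rw [List.length_append]; lia), List.getD_append _ _ _ _ hk]
  · rw [add_assoc, h _ (by rw [List.length_append]; lia),
      List.getD_append_right _ _ _ _ (Nat.le_add_right _ _), Nat.add_sub_cancel_left]
  · rcases lt_or_ge k α.length with hkα | hkα
    · rw [List.getD_append _ _ _ _ hkα, hα k hkα]
    · obtain ⟨j, rfl⟩ := Nat.exists_eq_add_of_le hkα
      rw [List.getD_append_right _ _ _ _ hkα, Nat.add_sub_cancel_left, ← add_assoc]
      exact hβ j (by rw [List.length_append] at hk; lia)

theorem occursAtInf_chaconWord_succ :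
    OccursAtInf V (chaconWord (n + 1)) p ↔
      OccursAtInf V (chaconWord n) p ∧ OccursAtInf V (chaconWord n) (p + ℓ n) ∧
      V (p + 2 * ℓ n) = 1 ∧ OccursAtInf V (chaconWord n) (p + 2 * ℓ n + 1) := by
  simp only [chaconWord, occursAtInf_append, occursAtInf_singleton, List.length_append,
    List.length_singleton, and_assoc, two_mul, add_assoc]

theorem OccursAtInf.apply_first_eq_zero (h : OccursAtInf V (chaconWord n) p) : V p = 0 := by
  induction n with
  | zero => exact occursAtInf_singleton.mp h
  | succ n ih => exact ih (occursAtInf_chaconWord_succ.mp h).1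

theorem OccursAtInf.apply_last_eq_zero (h : OccursAtInf V (chaconWord n) (p + 1)) :
    V (p + ℓ n) = 0 := by
  induction n generalizing p with
  | zero => exact occursAtInf_singleton.mp h
  | succ n ih =>
    obtain ⟨-, -, -, h_third⟩ := occursAtInf_chaconWord_succ.mp h
    rw [show p + 1 + 2 * ℓ n + 1 = p + 2 * ℓ n + 1 + 1 by ring] at h_third
    rw [length_chaconWord_succ, ← ih h_third]
    congr 1
    ring

end Occurrences

section ZeroDist

/-- The number of zeros of `α` facing a one of `V` when `α` is placed at position `x` of `V`:
the numerator of `d₀`. -/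
def zeroMismatches (V : ℕ → Fin 2) (α : List (Fin 2)) (x : ℕ) : ℕ :=
  #{k ∈ range α.length | α.getD k 0 = 0 ∧ V (x + k) = 1}

/-- The distance `d₀` between `Wₙ` and the window of `V` at position `x`. -/
noncomputable def zeroDist (V : ℕ → Fin 2) (n x : ℕ) : ℝ :=
  hamming0 (chaconWord n) (subword V x (ℓ n))

variable {V : ℕ → Fin 2} {n p x : ℕ}

theorem zeroMismatches_append (V : ℕ → Fin 2) (α β : List (Fin 2)) (x : ℕ) :
    zeroMismatches V (α ++ β) x =
      zeroMismatches V α x + zeroMismatches V β (x + α.length) := by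
  simp only [zeroMismatches, card_filter, List.length_append, sum_range_add]
  congr 1
  · refine sum_congr rfl fun k hk => ?_
    rw [List.getD_append _ _ _ _ (mem_range.mp hk)]
  · refine sum_congr rfl fun k _ => ?_
    rw [List.getD_append_right _ _ _ _ (Nat.le_add_right _ _), Nat.add_sub_cancel_left, add_assoc]

theorem zeroMismatches_singleton_zero (V : ℕ → Fin 2) (x : ℕ) :
    zeroMismatches V [0] x = V x := by
  simp only [zeroMismatches, List.length_singleton, range_one, filter_singleton]
  generalize V (x + 0) = a
  fin_cases a <;> rfl

theorem zeroMismatches_singleton_one (V : ℕ → Fin 2) (x : ℕ) : zeroMismatches V [1] x = 0 := by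
  simp [zeroMismatches]

theorem zeroMismatches_chaconWord_succ (V : ℕ → Fin 2) (n x : ℕ) :
    zeroMismatches V (chaconWord (n + 1)) x =
      zeroMismatches V (chaconWord n) x + zeroMismatches V (chaconWord n) (x + ℓ n) +
        zeroMismatches V (chaconWord n) (x + 2 * ℓ n + 1) := by
  simp only [chaconWord, zeroMismatches_append, zeroMismatches_singleton_one, List.length_append,
    List.length_singleton, add_zero, two_mul, add_assoc]

theorem card_zeros_chaconWord (n : ℕ) :
    #{k ∈ range (ℓ n) | (chaconWord n).getD k 0 = 0} = 3 ^ n := by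
  -- The zeros of a word are its mismatches against the constant word `1`.
  suffices h : ∀ x, zeroMismatches (fun _ => 1) (chaconWord n) x = 3 ^ n by
    simpa [zeroMismatches] using h 0
  induction n with
  | zero => exact fun x => zeroMismatches_singleton_zero _ x
  | succ n ih => intro x; rw [zeroMismatches_chaconWord_succ, ih, ih, ih]; ring

theorem getD_subword (V : ℕ → Fin 2) (x : ℕ) {k L : ℕ} (hk : k < L) :
    (subword V x L).getD k 0 = V (x + k) := by
  simp [subword, hk]

theorem zeroDist_eq_div (V : ℕ → Fin 2) (n x : ℕ) :
    zeroDist V n x = zeroMismatches V (chaconWord n) x / 3 ^ n := by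
  have h_num :
      #{k ∈ range (ℓ n) | (chaconWord n).getD k 0 = 0 ∧ (subword V x (ℓ n)).getD k 0 = 1} =
        zeroMismatches V (chaconWord n) x :=
    congrArg card <| filter_congr fun k hk => by rw [getD_subword V x (mem_range.mp hk)]
  rw [zeroDist, hamming0, h_num, card_zeros_chaconWord, Nat.cast_pow, Nat.cast_ofNat]

theorem zeroDist_nonneg (V : ℕ → Fin 2) (n x : ℕ) : 0 ≤ zeroDist V n x := by
  rw [zeroDist_eq_div]
  positivity

theorem zeroDist_zero (V : ℕ → Fin 2) (x : ℕ) : zeroDist V 0 x = (V x : ℕ) := by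
  rw [zeroDist_eq_div, chaconWord, zeroMismatches_singleton_zero, pow_zero, div_one]

theorem zeroDist_succ (V : ℕ → Fin 2) (n x : ℕ) :
    zeroDist V (n + 1) x =
      (zeroDist V n x + zeroDist V n (x + ℓ n) + zeroDist V n (x + 2 * ℓ n + 1)) / 3 := by
  simp only [zeroDist_eq_div, zeroMismatches_chaconWord_succ, Nat.cast_add]
  field

theorem OccursAtInf.zeroDist_eq_zero (h : OccursAtInf V (chaconWord n) p) :
    zeroDist V n p = 0 := by
  rw [zeroDist_eq_div, zeroMismatches, filter_false_of_mem, card_empty, Nat.cast_zero, zero_div]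
  rintro k hk ⟨h_zero, h_one⟩
  rw [h k (mem_range.mp hk), h_zero] at h_one
  exact zero_ne_one h_one

theorem OccursAtInf.zeroDist_add_one (h : OccursAtInf V (chaconWord n) p) :
    zeroDist V n (p + 1) = (1 - (1 / 3) ^ n) / 2 + (V (p + ℓ n) : ℕ) * (1 / 3) ^ n := by
  induction n generalizing p with
  | zero => simp [zeroDist_zero, chaconWord]
  | succ n ih =>
    obtain ⟨h_fst, h_snd, h_spacer, h_trd⟩ := occursAtInf_chaconWord_succ.mp h
    rw [zeroDist_succ, show p + 1 + ℓ n = p + ℓ n + 1 by ring,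
      show p + 1 + 2 * ℓ n + 1 = p + 2 * ℓ n + 1 + 1 by ring, ih h_fst, ih h_snd, ih h_trd,
      h_snd.apply_first_eq_zero, show p + ℓ n + ℓ n = p + 2 * ℓ n by ring, h_spacer,
      length_chaconWord_succ, show p + (3 * ℓ n + 1) = p + 2 * ℓ n + 1 + ℓ n by ring,
      Fin.val_zero, Fin.val_one]
    push_cast
    ring

theorem OccursAtInf.zeroDist_of_add_one (h : OccursAtInf V (chaconWord n) (p + 1)) :
    zeroDist V n p = (1 - (1 / 3) ^ n) / 2 + (V p : ℕ) * (1 / 3) ^ n := by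
  induction n generalizing p with
  | zero => simp [zeroDist_zero]
  | succ n ih =>
    obtain ⟨h_fst, h_snd, h_spacer, h_trd⟩ := occursAtInf_chaconWord_succ.mp h
    rw [show p + 1 + ℓ n = p + ℓ n + 1 by ring] at h_snd
    rw [show p + 1 + 2 * ℓ n = p + 2 * ℓ n + 1 by ring] at h_spacer h_trd
    rw [zeroDist_succ, ih h_fst, ih h_snd, ih h_trd, h_fst.apply_last_eq_zero, h_spacer,
      Fin.val_zero, Fin.val_one]
    push_cast
    ring

end ZeroDist

section BlockPairs

/-- The word `Wₙ 1ˢ Wₙ`, with `s ≤ 1`, occurs in `V` at position `p`: these are the ways in which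
two consecutive copies of `Wₙ` follow each other in the Chacón word. -/
def IsBlockPair (V : ℕ → Fin 2) (n s p : ℕ) : Prop :=
  s ≤ 1 ∧ OccursAtInf V (chaconWord n ++ List.replicate s 1 ++ chaconWord n) p

variable {V : ℕ → Fin 2} {m n s p x i : ℕ}

theorem isBlockPair_zero_iff :
    IsBlockPair V n 0 p ↔
      OccursAtInf V (chaconWord n) p ∧ OccursAtInf V (chaconWord n) (p + ℓ n) := by
  simp [IsBlockPair, occursAtInf_append]

theorem isBlockPair_one_iff :
    IsBlockPair V n 1 p ↔
      OccursAtInf V (chaconWord n) p ∧ V (p + ℓ n) = 1 ∧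
        OccursAtInf V (chaconWord n) (p + ℓ n + 1) := by
  simp only [IsBlockPair, List.replicate_one, occursAtInf_append, occursAtInf_singleton,
    List.length_append, List.length_singleton, le_refl, true_and, and_assoc, add_assoc]

theorem IsBlockPair.left (h : IsBlockPair V n s p) : OccursAtInf V (chaconWord n) p :=
  (occursAtInf_append.mp (occursAtInf_append.mp h.2).1).1

theorem IsBlockPair.right (h : IsBlockPair V n s p) :
    OccursAtInf V (chaconWord n) (p + ℓ n + s) := by
  simpa [add_assoc] using (occursAtInf_append.mp h.2).2

theorem IsBlockPair.right_of_succ (h : IsBlockPair V (n + 1) s p) :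
    OccursAtInf V (chaconWord (n + 1)) (p + 3 * ℓ n + 1 + s) := by
  simpa only [length_chaconWord_succ, add_assoc] using h.right

theorem OccursAtInf.isBlockPair_zero (h : OccursAtInf V (chaconWord (n + 1)) p) :
    IsBlockPair V n 0 p :=
  have ⟨h_fst, h_snd, _, _⟩ := occursAtInf_chaconWord_succ.mp h
  isBlockPair_zero_iff.mpr ⟨h_fst, h_snd⟩

theorem OccursAtInf.isBlockPair_one (h : OccursAtInf V (chaconWord (n + 1)) p) :
    IsBlockPair V n 1 (p + ℓ n) := by
  obtain ⟨-, h_snd, h_spacer, h_trd⟩ := occursAtInf_chaconWord_succ.mp h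
  rw [two_mul, ← add_assoc] at h_spacer h_trd
  exact isBlockPair_one_iff.mpr ⟨h_snd, h_spacer, h_trd⟩

theorem IsBlockPair.middle (h : IsBlockPair V (n + 1) s p) :
    IsBlockPair V n s (p + 2 * ℓ n + 1) := by
  obtain ⟨-, -, -, h_trd⟩ := occursAtInf_chaconWord_succ.mp h.left
  have h_fst := (occursAtInf_chaconWord_succ.mp h.right).1
  have h_end : p + 2 * ℓ n + 1 + ℓ n = p + ℓ (n + 1) := by rw [length_chaconWord_succ]; ring
  obtain rfl | rfl := Nat.le_one_iff_eq_zero_or_eq_one.mp h.1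
  · exact isBlockPair_zero_iff.mpr ⟨h_trd, h_end ▸ h_fst⟩
  · exact isBlockPair_one_iff.mpr ⟨h_trd, h_end ▸ (isBlockPair_one_iff.mp h).2.1, h_end ▸ h_fst⟩

theorem IsBlockPair.zeroDist_add_one (h : IsBlockPair V n 1 p) :
    zeroDist V n (p + 1) = (1 + (1 / 3) ^ n) / 2 := by
  obtain ⟨h_left, h_spacer, -⟩ := isBlockPair_one_iff.mp h
  rw [h_left.zeroDist_add_one, h_spacer, Fin.val_one]
  push_cast
  ring

theorem IsBlockPair.zeroDist_add_length (h : IsBlockPair V n 1 p) :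
    zeroDist V n (p + ℓ n) = (1 + (1 / 3) ^ n) / 2 := by
  obtain ⟨-, h_spacer, h_right⟩ := isBlockPair_one_iff.mp h
  rw [h_right.zeroDist_of_add_one, h_spacer, Fin.val_one]
  push_cast
  ring

/-- Position `x` of `V` lies strictly between the starts of the two blocks of some `Wₙ 1ˢ Wₙ`,
`s ≤ 1`, occurring in `V`. -/
def IsBetweenBlocks (V : ℕ → Fin 2) (n x : ℕ) : Prop :=
  ∃ s p, IsBlockPair V n s p ∧ p < x ∧ x < p + ℓ n + s

theorem IsBlockPair.isBetweenBlocks (h : IsBlockPair V (n + 1) s p) (hpx : p < x)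
    (hxp : x < p + 5 * ℓ n + 2 + s) (h_second : x ≠ p + ℓ n) (h_third : x ≠ p + 2 * ℓ n + 1)
    (h_fourth : x ≠ p + 3 * ℓ n + 1 + s) (h_fifth : x ≠ p + 4 * ℓ n + 1 + s) :
    IsBetweenBlocks V n x := by
  by_cases h_first_block : x < p + ℓ n
  · exact ⟨0, p, h.left.isBlockPair_zero, hpx, h_first_block⟩
  by_cases h_second_block : x < p + 2 * ℓ n + 1
  · exact ⟨1, p + ℓ n, h.left.isBlockPair_one, by lia, by lia⟩
  by_cases h_third_block : x < p + 3 * ℓ n + 1 + s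
  · exact ⟨s, p + 2 * ℓ n + 1, h.middle, by lia, by lia⟩
  by_cases h_fourth_block : x < p + 4 * ℓ n + 1 + s
  · exact ⟨0, p + 3 * ℓ n + 1 + s, h.right_of_succ.isBlockPair_zero, by lia, by lia⟩
  · exact ⟨1, p + 3 * ℓ n + 1 + s + ℓ n, h.right_of_succ.isBlockPair_one, by lia, by lia⟩

theorem le_zeroDist_succ_of_exists
    (h : ∃ y ∈ ({x, x + ℓ n, x + 2 * ℓ n + 1} : Set ℕ), zeroDist V n y = (1 + (1 / 3) ^ n) / 2) :
    (1 + (1 / 3) ^ n) / 6 ≤ zeroDist V (n + 1) x := by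
  have h_fst := zeroDist_nonneg V n x
  have h_snd := zeroDist_nonneg V n (x + ℓ n)
  have h_trd := zeroDist_nonneg V n (x + 2 * ℓ n + 1)
  rw [zeroDist_succ]
  rcases h with ⟨y, rfl | rfl | rfl, hy⟩ <;> linarith

theorem IsBlockPair.exists_zeroDist_eq_or_forall_isBetweenBlocks (h : IsBlockPair V (n + 1) s p)
    (hpx : p < x) (hxp : x < p + 3 * ℓ n + 1 + s) :
    (∃ y ∈ ({x, x + ℓ n, x + 2 * ℓ n + 1} : Set ℕ), zeroDist V n y = (1 + (1 / 3) ^ n) / 2) ∨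
      ∀ y ∈ ({x, x + ℓ n, x + 2 * ℓ n + 1} : Set ℕ), IsBetweenBlocks V n y := by
  have h_pos : n < ℓ n := lt_length_chaconWord n
  have hs := h.1
  have h_first : IsBlockPair V n 1 (p + ℓ n) := h.left.isBlockPair_one
  have h_last : IsBlockPair V n 1 (p + 3 * ℓ n + 1 + s + ℓ n) := h.right_of_succ.isBlockPair_one
  -- Whenever one of the three positions is the start of a block, another one is the position
  -- just after the start of a block followed by a spacer, or that of the spacer itself.
  by_cases h_second_start : x = p + ℓ n
  · exact .inl ⟨_, .inr (.inl rfl), h_second_start ▸ h_first.zeroDist_add_length⟩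
  by_cases h_after_second_start : x = p + ℓ n + 1
  · exact .inl ⟨_, .inl rfl, h_after_second_start ▸ h_first.zeroDist_add_one⟩
  by_cases h_first_spacer : x = p + ℓ n + ℓ n
  · exact .inl ⟨_, .inl rfl, h_first_spacer ▸ h_first.zeroDist_add_length⟩
  by_cases h_third_start : x = p + 2 * ℓ n + 1
  · obtain rfl | rfl := Nat.le_one_iff_eq_zero_or_eq_one.mp hs
    · refine .inl ⟨_, .inr (.inr rfl), ?_⟩
      rw [← h_last.zeroDist_add_one]
      congr 1
      lia
    · exact .inl ⟨_, .inr (.inl rfl), h_third_start ▸ h.middle.zeroDist_add_length⟩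
  by_cases h_after_third_start : s = 1 ∧ x = p + 2 * ℓ n + 1 + 1
  · obtain ⟨rfl, rfl⟩ := h_after_third_start
    exact .inl ⟨_, .inl rfl, h.middle.zeroDist_add_one⟩
  refine .inr fun y hy => ?_
  rcases hy with rfl | rfl | rfl <;> apply h.isBetweenBlocks <;> lia

theorem IsBetweenBlocks.le_zeroDist (h : IsBetweenBlocks V n x) :
    (1 + (1 / 3) ^ n) / 6 ≤ zeroDist V n x := by
  induction n generalizing x with
  | zero =>
    obtain ⟨s, p, h_pair, hpx, hxp⟩ := h
    have hs := h_pair.1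
    change x < p + 1 + s at hxp
    obtain rfl : s = 1 := by lia
    obtain rfl : x = p + 1 := by lia
    rw [h_pair.zeroDist_add_one]
    norm_num
  | succ n ih =>
    obtain ⟨s, p, h_pair, hpx, hxp⟩ := h
    rw [length_chaconWord_succ, ← add_assoc] at hxp
    have h_bound : (1 + (1 / 3) ^ n) / 6 ≤ zeroDist V (n + 1) x := by
      rcases h_pair.exists_zeroDist_eq_or_forall_isBetweenBlocks hpx hxp with h_exists | h_forall
      · exact le_zeroDist_succ_of_exists h_exists
      · have h_fst := ih (h_forall x (.inl rfl))
        have h_snd := ih (h_forall (x + ℓ n) (.inr (.inl rfl)))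
        have h_trd := ih (h_forall (x + 2 * ℓ n + 1) (.inr (.inr rfl)))
        rw [zeroDist_succ]
        linarith
    have h_pow : (1 / 3 : ℝ) ^ (n + 1) ≤ (1 / 3) ^ n :=
      pow_le_pow_of_le_one (by norm_num) (by norm_num) n.le_succ
    linarith

theorem IsBlockPair.zeroDist_mem_of_le {C : Set ℝ} (hC : Convex ℝ C)
    (h_base : ∀ s p, IsBlockPair V m s p → zeroDist V m (p + i) ∈ C) (hmn : m ≤ n)
    (h : IsBlockPair V n s p) : zeroDist V n (p + i) ∈ C := by
  induction n, hmn using Nat.le_induction generalizing s p with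
  | base => exact h_base s p h
  | succ n _ ih =>
    have h_fst := ih h.left.isBlockPair_zero
    have h_snd := ih h.left.isBlockPair_one
    have h_trd := ih h.middle
    rw [show p + ℓ n + i = p + i + ℓ n by ring] at h_snd
    rw [show p + 2 * ℓ n + 1 + i = p + i + 2 * ℓ n + 1 by ring] at h_trd
    have h_mid := hC h_fst h_snd (a := 1 / 2) (b := 1 / 2) (by norm_num) (by norm_num) (by norm_num)
    have h_avg := hC h_mid h_trd (a := 2 / 3) (b := 1 / 3) (by norm_num) (by norm_num) (by norm_num)
    convert h_avg using 1
    rw [zeroDist_succ]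
    simp only [smul_eq_mul]
    ring

theorem IsBlockPair.le_zeroDist_add (hi : 0 < i) (him : i < ℓ m) (hmn : m ≤ n)
    (h : IsBlockPair V n s p) : (1 + (1 / 3) ^ m) / 6 ≤ zeroDist V n (p + i) :=
  h.zeroDist_mem_of_le (convex_Ici _)
    (fun t q h_pair =>
      IsBetweenBlocks.le_zeroDist (n := m) ⟨t, q, h_pair, by lia, by lia⟩) hmn

theorem IsBlockPair.zeroDist_add_third_block_of_succ (h : IsBlockPair V (m + 1) s p) :
    zeroDist V (m + 1) (p + (2 * ℓ m + 1)) = (1 + (1 / 3) ^ m) / 6 := by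
  have h_fst : zeroDist V m (p + 2 * ℓ m + 1) = 0 := h.middle.left.zeroDist_eq_zero
  rw [zeroDist_succ, ← add_assoc, h_fst]
  obtain rfl | rfl := Nat.le_one_iff_eq_zero_or_eq_one.mp h.1
  · have h_snd := h.right_of_succ.isBlockPair_zero.left.zeroDist_eq_zero
    have h_trd := h.right_of_succ.isBlockPair_one.zeroDist_add_one
    rw [show p + 2 * ℓ m + 1 + ℓ m = p + 3 * ℓ m + 1 + 0 by ring, h_snd,
      show p + 2 * ℓ m + 1 + 2 * ℓ m + 1 = p + 3 * ℓ m + 1 + 0 + ℓ m + 1 by ring, h_trd]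
    ring
  · have h_trd := h.right_of_succ.isBlockPair_zero.right.zeroDist_eq_zero
    rw [h.middle.zeroDist_add_length,
      show p + 2 * ℓ m + 1 + 2 * ℓ m + 1 = p + 3 * ℓ m + 1 + 1 + ℓ m + 0 by ring, h_trd]
    ring

theorem IsBlockPair.zeroDist_add_third_block (hmn : m + 1 ≤ n) (h : IsBlockPair V n s p) :
    zeroDist V n (p + (2 * ℓ m + 1)) = (1 + (1 / 3) ^ m) / 6 :=
  h.zeroDist_mem_of_le (convex_singleton _)
    (fun _ _ h_pair => h_pair.zeroDist_add_third_block_of_succ) hmn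

end BlockPairs

section Hamming

theorem hamming_nonneg (α β : List (Fin 2)) : 0 ≤ hamming α β := by
  unfold hamming
  positivity

theorem hamming_le_one (α β : List (Fin 2)) : hamming α β ≤ 1 := by
  refine div_le_one_of_le₀ ?_ (Nat.cast_nonneg _)
  exact_mod_cast (card_filter_le _ _).trans_eq (card_range _)

theorem card_ne_add_sum_eq (f g : ℕ → Fin 2) (L : ℕ) :
    #{k ∈ range L | f k ≠ g k} + ∑ k ∈ range L, (g k : ℕ) =
      2 * #{k ∈ range L | f k = 0 ∧ g k = 1} + ∑ k ∈ range L, (f k : ℕ) := by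
  simp only [card_filter, mul_sum, ← sum_add_distrib]
  refine sum_congr rfl fun k _ => ?_
  generalize f k = a
  generalize g k = b
  fin_cases a <;> fin_cases b <;> rfl

theorem abs_sum_range_shift_sub_le (f : ℕ → Fin 2) (i L : ℕ) :
    |((∑ k ∈ range L, (f k : ℕ) : ℕ) : ℤ) - (∑ k ∈ range L, (f (i + k) : ℕ) : ℕ)| ≤ i := by
  have h_ones (g : ℕ → Fin 2) : ∑ k ∈ range i, (g k : ℕ) ≤ i := by
    simpa using sum_le_card_nsmul (range i) (fun k => (g k : ℕ)) 1 fun k _ => (g k).is_le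
  have h_first := h_ones f
  have h_last := h_ones fun k => f (L + k)
  have h_split := sum_range_add (fun k => (f k : ℕ)) i L
  rw [add_comm i L, sum_range_add] at h_split
  rw [abs_le]
  lia

theorem abs_card_ne_shift_sub_le (f : ℕ → Fin 2) (i L : ℕ) :
    |(#{k ∈ range L | f k ≠ f (i + k)} : ℤ) - 2 * #{k ∈ range L | f k = 0 ∧ f (i + k) = 1}| ≤
      i := by
  have h_count := card_ne_add_sum_eq f (fun k => f (i + k)) L
  have h_shift := abs_sum_range_shift_sub_le f i L
  rw [abs_le] at h_shift ⊢
  lia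

variable {W : ℕ → Fin 2}

theorem hamming_chaconWord_subword (hW : IsChaconInfWord W) (n i : ℕ) :
    hamming (chaconWord n) (subword W i (ℓ n)) = #{k ∈ range (ℓ n) | W k ≠ W (i + k)} / ℓ n := by
  rw [hamming]
  congr 3
  refine filter_congr fun k hk => ?_
  rw [getD_subword W i (mem_range.mp hk), hW n k (mem_range.mp hk)]

theorem zeroMismatches_chaconWord (hW : IsChaconInfWord W) (n i : ℕ) :
    zeroMismatches W (chaconWord n) i = #{k ∈ range (ℓ n) | W k = 0 ∧ W (i + k) = 1} := by
  rw [zeroMismatches]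
  congr 1
  refine filter_congr fun k hk => ?_
  rw [hW n k (mem_range.mp hk)]

theorem abs_hamming_mul_length_sub_le (hW : IsChaconInfWord W) (n i : ℕ) :
    |hamming (chaconWord n) (subword W i (ℓ n)) * ℓ n -
      2 * zeroMismatches W (chaconWord n) i| ≤ i := by
  have h_pos : (0 : ℝ) < ℓ n := by exact_mod_cast n.zero_le.trans_lt (lt_length_chaconWord n)
  rw [hamming_chaconWord_subword hW, div_mul_cancel₀ _ h_pos.ne', zeroMismatches_chaconWord hW]
  exact_mod_cast abs_card_ne_shift_sub_le W i (ℓ n)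

theorem abs_hamming_sub_zeroDist_le (hW : IsChaconInfWord W) (n i : ℕ) :
    |hamming (chaconWord n) (subword W i (ℓ n)) - 4 / 3 * zeroDist W n i| ≤
      (i + 1) * (1 / 3) ^ n := by
  have h_nonneg := hamming_nonneg (chaconWord n) (subword W i (ℓ n))
  have h_le_one := hamming_le_one (chaconWord n) (subword W i (ℓ n))
  have h_length : (2 * ℓ n + 1 : ℝ) = 3 ^ n * 3 := by
    exact_mod_cast two_mul_length_chaconWord_add_one n
  have h_close := abs_le.mp (abs_hamming_mul_length_sub_le hW n i)
  have h_pow : (0 : ℝ) < 3 ^ n := by positivity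
  set d := hamming (chaconWord n) (subword W i (ℓ n))
  have h_mul : d * ℓ n = (d * 3 ^ n * 3 - d) / 2 := by linear_combination d / 2 * h_length
  rw [h_mul] at h_close
  rw [zeroDist_eq_div, one_div_pow, mul_one_div, ← mul_div_assoc, sub_div' h_pow.ne', abs_div,
    abs_of_pos h_pow]
  gcongr
  rw [abs_le]
  constructor <;> linarith

theorem tendsto_hamming_sub_zeroDist (hW : IsChaconInfWord W) (i : ℕ) :
    Tendsto (fun n => hamming (chaconWord n) (subword W i (ℓ n)) - 4 / 3 * zeroDist W n i)
      atTop (𝓝 0) := by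
  refine squeeze_zero_norm (abs_hamming_sub_zeroDist_le hW · i) ?_
  simpa using (tendsto_pow_atTop_nhds_zero_of_lt_one (r := (1 / 3 : ℝ)) (by norm_num)
    (by norm_num)).const_mul ((i : ℝ) + 1)

end Hamming

namespace IsChaconInfWord

variable {W : ℕ → Fin 2}

theorem isBlockPair (hW : IsChaconInfWord W) (n : ℕ) : IsBlockPair W n 0 0 := by
  refine OccursAtInf.isBlockPair_zero fun k hk => ?_
  rw [zero_add]
  exact hW (n + 1) k hk

theorem le_liminf_hamming (hW : IsChaconInfWord W) {i m : ℕ} (hi : 0 < i) (him : i < ℓ m) :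
    2 / 9 * (1 + (1 / 3) ^ m) ≤
      liminf (fun n => hamming (chaconWord n) (subword W i (ℓ n))) atTop := by
  have h_lim := (tendsto_hamming_sub_zeroDist hW i).add_const (2 / 9 * (1 + (1 / 3 : ℝ) ^ m))
  rw [zero_add] at h_lim
  rw [← h_lim.liminf_eq]
  refine liminf_le_liminf ?_ h_lim.isBoundedUnder_ge
    (isBoundedUnder_of ⟨1, fun n => hamming_le_one _ _⟩).isCoboundedUnder_ge
  filter_upwards [eventually_ge_atTop m] with n hmn
  have h_zeroDist := (hW.isBlockPair n).le_zeroDist_add hi him hmn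
  rw [zero_add] at h_zeroDist
  linarith

theorem tendsto_hamming_third_block (hW : IsChaconInfWord W) (m : ℕ) :
    Tendsto (fun n => hamming (chaconWord n) (subword W (2 * ℓ m + 1) (ℓ n))) atTop
      (𝓝 (2 / 9 * (1 + (1 / 3) ^ m))) := by
  have h_lim := (tendsto_hamming_sub_zeroDist hW (2 * ℓ m + 1)).add_const
    (2 / 9 * (1 + (1 / 3 : ℝ) ^ m))
  rw [zero_add] at h_lim
  refine h_lim.congr' ?_
  filter_upwards [eventually_ge_atTop (m + 1)] with n hmn
  have h_zeroDist := (hW.isBlockPair n).zeroDist_add_third_block hmn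
  rw [zero_add] at h_zeroDist
  rw [h_zeroDist]
  ring

theorem two_ninths_lt_liminf_hamming (hW : IsChaconInfWord W) {i : ℕ} (hi : 0 < i) :
    2 / 9 < liminf (fun n => hamming (chaconWord n) (subword W i (ℓ n))) atTop := by
  have h_pow : (0 : ℝ) < (1 / 3) ^ i := by positivity
  linarith [hW.le_liminf_hamming hi (lt_length_chaconWord i)]

end IsChaconInfWord

theorem chacon_inf_liminf (W : ℕ → Fin 2) (hW : IsChaconInfWord W) :
    sInf {x : ℝ | ∃ i : ℕ, 0 < i ∧
        x = Filter.liminf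
          (fun n => hamming (chaconWord n) (subword W i (chaconWord n).length)) atTop}
      = 2 / 9 ∧
    ∀ i : ℕ, 0 < i →
      Filter.liminf
          (fun n => hamming (chaconWord n) (subword W i (chaconWord n).length)) atTop
        > 2 / 9 := by
  refine ⟨IsGLB.csInf_eq ⟨?_, fun b hb => ?_⟩ ⟨_, 1, one_pos, rfl⟩,
    fun i hi => hW.two_ninths_lt_liminf_hamming hi⟩
  · rintro _ ⟨i, hi, rfl⟩
    exact (hW.two_ninths_lt_liminf_hamming hi).le
  · have h_values : Tendsto (fun m : ℕ => 2 / 9 * (1 + (1 / 3 : ℝ) ^ m)) atTop (𝓝 (2 / 9)) := by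
      simpa using ((tendsto_pow_atTop_nhds_zero_of_lt_one (r := (1 / 3 : ℝ)) (by norm_num)
        (by norm_num)).const_add 1).const_mul (2 / 9)
    refine ge_of_tendsto' h_values fun m => ?_
    rw [← (hW.tendsto_hamming_third_block m).liminf_eq]
    exact hb ⟨2 * ℓ m + 1, Nat.succ_pos _, rfl⟩
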